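/- Let L be a complete lattice in which every element is the supremum of a set of very weakly ⊤-compact elements. Then the infimum of the set of elements maximal below ⊤ equals the supremum of the set of all non-generators of L. -/

import Mathlib

def NonGenerator {L : Type*} [PartialOrder L] [OrderTop L] (a : L) : Prop :=
  ∀ e : L, (¬ ∃ p : L, p < ⊤ ∧ a ≤ p ∧ e ≤ p) → e = ⊤

def MaximalBelowTop {L : Type*} [PartialOrder L] [OrderTop L] (p : L) : Prop :=
  p < ⊤ ∧ ¬ ∃ q : L, p < q ∧ q < ⊤

def UnboundedBelowTopChain {L : Type*} [PartialOrder L] [OrderTop L] (C : Set L) : Prop :=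
  C.Nonempty ∧ IsChain (· ≤ ·) C ∧ (∀ c ∈ C, c < ⊤) ∧
    ¬ ∃ p : L, p < ⊤ ∧ ∀ c ∈ C, c ≤ p

def VeryWeaklyTopCompact {L : Type*} [PartialOrder L] [OrderTop L] (a : L) : Prop :=
  ∀ C : Set L, UnboundedBelowTopChain C →
    (∀ c ∈ C, ¬ ∃ p : L, MaximalBelowTop p ∧ c ≤ p) →
    ∃ c ∈ C, ∃ r : L, r < ⊤ ∧ c ≤ r ∧ a ≤ r

theorem stmt_12 {L : Type*} [CompleteLattice L]
    (halg : ∀ x : L, ∃ A : Set L, (∀ a ∈ A, VeryWeaklyTopCompact a) ∧ x = sSup A) :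
    sInf {p : L | MaximalBelowTop p} = sSup {x : L | NonGenerator x} := by
  apply le_antisymm
  · obtain ⟨A, hA, hx⟩ := halg (sInf {p : L | MaximalBelowTop p})
    rw [hx]
    apply sSup_le
    intro a ha
    apply le_sSup
    have haΦ : a ≤ sInf {p : L | MaximalBelowTop p} := by
      rw [hx]
      exact le_sSup ha
    intro e he
    by_contra hne
    have hno : ∀ c : L, e ≤ c → ¬ ∃ p : L, MaximalBelowTop p ∧ c ≤ p := by
      rintro c hec ⟨p, hp, hcp⟩
      exact he ⟨p, hp.1, haΦ.trans (sInf_le hp), hec.trans hcp⟩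
    obtain ⟨m, hem, hm⟩ := zorn_le_nonempty₀ {y : L | e ≤ y ∧ y < ⊤} (by
      intro C hC hchain y hy
      by_contra hub
      obtain ⟨c, hc, r, hr, hcr, har⟩ := hA a ha C
        ⟨⟨y, hy⟩, hchain, fun c hc => (hC hc).2, by
          rintro ⟨p, hp, hpc⟩
          exact hub ⟨p, ⟨(hC hy).1.trans (hpc y hy), hp⟩, hpc⟩⟩
        (fun c hc => hno c (hC hc).1)
      exact he ⟨r, hr, har, (hC hc).1.trans hcr⟩) e ⟨le_rfl, lt_top_iff_ne_top.2 hne⟩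
    refine hno m hem ⟨m, ⟨hm.prop.2, ?_⟩, le_rfl⟩
    rintro ⟨q, hmq, hq⟩
    exact hmq.not_ge (hm.le_of_ge ⟨hem.trans hmq.le, hq⟩ hmq.le)
  · apply sSup_le
    intro a ha
    apply le_sInf
    intro p hp
    by_contra hap
    refine hp.1.ne (ha p ?_)
    rintro ⟨q, hq, haq, hpq⟩
    refine hp.2 ⟨q, lt_of_le_of_ne hpq ?_, hq⟩
    rintro rfl
    exact hap haq
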